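/- arXiv:0911.0804 — 4 statements merged into one kernel-verified Lean document; each statement's English description precedes it below -/
import Mathlib

section
/- The maps f(x) = x + exp(-1/x) (for x > 0, f(0)=0) and g(x) = x + exp(-1/x²) (for x > 0, g(0)=0) are smooth diffeomorphisms of [0,∞) that are not conjugate in the group of C¹ diffeomorphisms of [0,∞): there is no C¹ diffeomorphism h of [0,∞) with h ∘ f = g ∘ h. -/
open Set

lemma aux_bij (F : ℝ → ℝ) (hc : ContinuousOn F (Ici 0)) (hm : StrictMonoOn F (Ici 0))
    (h0 : F 0 = 0) (hle : ∀ x, 0 ≤ x → x ≤ F x) : BijOn F (Ici 0) (Ici 0) := by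
  refine ⟨fun x hx => le_trans hx (hle x hx), hm.injOn, ?_⟩
  intro y hy
  have hy' : (0:ℝ) ≤ y := hy
  obtain ⟨x, hx, hxy⟩ := intermediate_value_Icc hy' (hc.mono Icc_subset_Ici_self)
    (show y ∈ Icc (F 0) (F y) from ⟨by rw [h0]; exact hy', hle y hy'⟩)
  exact ⟨x, hx.1, hxy⟩

lemma aux_mono (F p : ℝ → ℝ) (hF : ∀ x > (0:ℝ), F x = x + Real.exp (p x)) (h0 : F 0 = 0)
    (hp : ∀ x y, 0 < x → x < y → p x ≤ p y) : StrictMonoOn F (Ici 0) := by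
  intro x hx y hy hxy
  have hx' : (0:ℝ) ≤ x := hx
  have hy' : 0 < y := lt_of_le_of_lt hx' hxy
  rcases hx'.eq_or_lt with h | h
  · rw [← h, h0, hF y hy']; positivity
  · rw [hF x h, hF y hy']
    have := Real.exp_le_exp.2 (hp x y h hxy)
    linarith

lemma aux_le (F p : ℝ → ℝ) (hF : ∀ x > (0:ℝ), F x = x + Real.exp (p x)) (h0 : F 0 = 0)
    (x : ℝ) (hx : 0 ≤ x) : x ≤ F x := by
  rcases hx.eq_or_lt with h | h
  · rw [← h, h0]
  · rw [hF x h]; have := Real.exp_pos (p x); linarith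

lemma aux_final (a t H : ℝ) (ha : 0 < a) (h1 : 8 * a ^ 2 ≤ t) (h2 : 2 / a ≤ t)
    (hH0 : 0 < H) (hH : H ≤ 2 * a * t⁻¹)
    (hi : a / 2 * Real.exp (-t) ≤ Real.exp (-1 / H ^ 2)) : False := by
  have ht : 0 < t := by have : 0 < 2 / a := by positivity
                        linarith
  have h3 : -1 / H ^ 2 ≤ -t + -t := by
    have e1 : H * t ≤ 2 * a := by
      have := mul_le_mul_of_nonneg_right hH ht.le
      rwa [mul_assoc, inv_mul_cancel₀ ht.ne', mul_one] at this
    have e2 : (H * t) ^ 2 ≤ (2 * a) ^ 2 := by gcongr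
    rw [div_le_iff₀ (by positivity)]
    have e3 : (2 * t * H ^ 2) * t ≤ 1 * t := by nlinarith
    have := le_of_mul_le_mul_right e3 ht
    nlinarith
  have h4 := hi.trans (Real.exp_le_exp.2 h3)
  rw [Real.exp_add] at h4
  have h5 : a / 2 ≤ Real.exp (-t) := le_of_mul_le_mul_right h4 (Real.exp_pos _)
  have h6 : t + 1 ≤ Real.exp t := Real.add_one_le_exp t
  have h7 : Real.exp (-t) * Real.exp t = 1 := by rw [← Real.exp_add]; simp
  have h8 : 2 ≤ t * a := (div_le_iff₀ ha).1 h2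
  have h9 : a / 2 * (t + 1) ≤ Real.exp (-t) * Real.exp t :=
    mul_le_mul h5 h6 (by positivity) (Real.exp_pos _).le
  nlinarith

/-- The maps `f(x) = x + e^{-1/x}` and `g(x) = x + e^{-1/x²}` (extended by `0 ↦ 0`)
are smooth diffeomorphisms of `[0,∞)` that are not conjugate by any C¹
diffeomorphism of `[0,∞)`. -/
theorem stmt_4 (f g : ℝ → ℝ)
    (hf : ∀ x > (0:ℝ), f x = x + Real.exp (-1 / x)) (hf0 : f 0 = 0)
    (hg : ∀ x > (0:ℝ), g x = x + Real.exp (-1 / x ^ 2)) (hg0 : g 0 = 0) :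
    (ContDiffOn ℝ (⊤ : ℕ∞) f (Ici 0) ∧ BijOn f (Ici 0) (Ici 0) ∧ StrictMonoOn f (Ici 0)) ∧
    (ContDiffOn ℝ (⊤ : ℕ∞) g (Ici 0) ∧ BijOn g (Ici 0) (Ici 0) ∧ StrictMonoOn g (Ici 0)) ∧
    ¬ ∃ h : ℝ → ℝ, ContDiffOn ℝ 1 h (Ici 0) ∧ BijOn h (Ici 0) (Ici 0) ∧
        StrictMonoOn h (Ici 0) ∧ (∀ x ∈ Ici (0:ℝ), derivWithin h (Ici 0) x ≠ 0) ∧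
        ∀ x ∈ Ici (0:ℝ), h (f x) = g (h x) := by
  have fs : ContDiffOn ℝ (⊤ : ℕ∞) f (Ici 0) := by
    have : ContDiff ℝ (⊤ : ℕ∞) (fun x : ℝ => x + expNegInvGlue x) :=
      contDiff_id.add expNegInvGlue.contDiff
    refine this.contDiffOn.congr fun x hx => ?_
    rcases (show (0:ℝ) ≤ x from hx).eq_or_lt with h | h
    · subst h; simp [hf0, expNegInvGlue]
    · rw [hf x h]; simp [expNegInvGlue, not_le.2 h, neg_div]
  have gs : ContDiffOn ℝ (⊤ : ℕ∞) g (Ici 0) := by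
    have : ContDiff ℝ (⊤ : ℕ∞) (fun x : ℝ => x + expNegInvGlue (x ^ 2)) :=
      contDiff_id.add (expNegInvGlue.contDiff.comp (contDiff_id.pow 2))
    refine this.contDiffOn.congr fun x hx => ?_
    rcases (show (0:ℝ) ≤ x from hx).eq_or_lt with h | h
    · subst h; simp [hg0, expNegInvGlue]
    · have h2 : 0 < x ^ 2 := by positivity
      rw [hg x h, expNegInvGlue, if_neg (not_le.2 h2), neg_div, one_div]
  have fm : StrictMonoOn f (Ici 0) := aux_mono f (fun x => -1 / x) hf hf0 fun x y hx hxy => by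
    simp only [neg_div]
    exact neg_le_neg (one_div_le_one_div_of_le hx hxy.le)
  have gm : StrictMonoOn g (Ici 0) := aux_mono g (fun x => -1 / x ^ 2) hg hg0 fun x y hx hxy => by
    simp only [neg_div]
    exact neg_le_neg (one_div_le_one_div_of_le (by positivity) (by gcongr))
  refine ⟨⟨fs, aux_bij f fs.continuousOn fm hf0 (aux_le f _ hf hf0), fm⟩,
    ⟨gs, aux_bij g gs.continuousOn gm hg0 (aux_le g _ hg hg0), gm⟩, ?_⟩
  rintro ⟨h, hC, hB, hM, hD, hE⟩
  have m0 : (0:ℝ) ∈ Ici (0:ℝ) := self_mem_Ici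
  have h0 : h 0 = 0 := by
    obtain ⟨y, hy, hy0⟩ := hB.surjOn m0
    have h1 : 0 ≤ h 0 := hB.mapsTo m0
    have h2 : h 0 ≤ h y := hM.monotoneOn m0 hy hy
    linarith
  set D := derivWithin h (Ici 0) with hDdef
  have hcont : ContinuousOn D (Ici 0) :=
    hC.continuousOn_derivWithin (uniqueDiffOn_Ici 0) le_rfl
  have ha : 0 < D 0 := lt_of_le_of_ne (hM.monotoneOn.derivWithin_nonneg) (hD 0 m0).symm
  set a := D 0 with ha_def
  obtain ⟨δ, hδ, hδ'⟩ := Metric.continuousWithinAt_iff.1 (hcont 0 m0) (a / 2) (by positivity)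
  have hb : ∀ x, 0 ≤ x → x < δ → a / 2 ≤ D x ∧ D x ≤ 2 * a := by
    intro x hx hxd
    have := hδ' (show x ∈ Ici (0:ℝ) from hx) (by rw [Real.dist_eq, sub_zero, abs_of_nonneg hx]; exact hxd)
    rw [Real.dist_eq, abs_lt] at this
    constructor <;> linarith [this.1, this.2]
  have mvt : ∀ u v, 0 ≤ u → u < v → v < δ →
      a / 2 * (v - u) ≤ h v - h u ∧ h v - h u ≤ 2 * a * (v - u) := by
    intro u v hu huv hv
    obtain ⟨c, hc, hce⟩ := exists_deriv_eq_slope h huv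
      (hC.continuousOn.mono fun x hx => hu.trans hx.1)
      ((hC.differentiableOn one_ne_zero).mono fun x hx => hu.trans hx.1.le)
    have hc0 : 0 < c := lt_of_le_of_lt hu hc.1
    have hcD : D c = deriv h c := derivWithin_of_mem_nhds (Ici_mem_nhds hc0)
    obtain ⟨b1, b2⟩ := hb c hc0.le (hc.2.trans hv)
    have hvu : 0 < v - u := by linarith
    rw [hcD, hce] at b1 b2
    exact ⟨(le_div_iff₀ hvu).1 b1, (div_le_iff₀ hvu).1 b2⟩
  obtain ⟨t, ht⟩ := exists_gt (max (8 * a ^ 2) (max (2 / a) (2 / δ)))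
  have t1 : 8 * a ^ 2 < t := lt_of_le_of_lt (le_max_left _ _) ht
  have t2 : 2 / a < t := lt_of_le_of_lt ((le_max_left _ _).trans (le_max_right _ _)) ht
  have t3 : 2 / δ < t := lt_of_le_of_lt ((le_max_right _ _).trans (le_max_right _ _)) ht
  have tp : 0 < t := lt_trans (by positivity) t2
  have xp : 0 < t⁻¹ := inv_pos.2 tp
  have hfx : f t⁻¹ = t⁻¹ + Real.exp (-t) := by
    rw [hf _ xp]; congr 2; field_simp
  have hex : Real.exp (-t) ≤ t⁻¹ := by
    rw [Real.exp_neg]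
    exact inv_anti₀ tp (by linarith [Real.add_one_le_exp t])
  have hxd : 2 * t⁻¹ < δ := by
    rw [div_lt_iff₀ hδ] at t3
    rw [← div_eq_mul_inv, div_lt_iff₀ tp]; linarith
  have hH0 : 0 < h t⁻¹ := by
    have := hM m0 (show t⁻¹ ∈ Ici (0:ℝ) from xp.le) xp
    rwa [h0] at this
  have hH := (mvt 0 t⁻¹ le_rfl xp (by linarith)).2
  rw [h0, sub_zero, sub_zero] at hH
  have hi := (mvt t⁻¹ (f t⁻¹) xp.le (by rw [hfx]; linarith [Real.exp_pos (-t)])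
    (by rw [hfx]; linarith)).1
  rw [hE _ xp.le, hg _ hH0, hfx, add_sub_cancel_left, add_sub_cancel_left] at hi
  exact aux_final a t (h t⁻¹) ha t1.le t2.le hH0 hH hi
end

section
/- Let I be an open interval and let f, g be fixed-point-free, orientation-preserving smooth diffeomorphisms of I. Then f and g are conjugate in the group of orientation-preserving smooth diffeomorphisms of I if and only if their graphs lie on the same side of the diagonal (i.e. either f(x) > x and g(x) > x for all x ∈ I, or f(x) < x and g(x) < x for all x ∈ I). -/
open Set

/-- Smooth, maps `U` to `V`, positive derivative. -/
def SD (U V : Set ℝ) (f : ℝ → ℝ) : Prop :=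
  (∀ x ∈ U, ContDiffAt ℝ (⊤ : ℕ∞) f x) ∧ MapsTo f U V ∧ ∀ x ∈ U, 0 < deriv f x

lemma SD.hasDerivAt {U V : Set ℝ} {f : ℝ → ℝ} (h : SD U V f) {x : ℝ} (hx : x ∈ U) :
    HasDerivAt f (deriv f x) x :=
  ((h.1 x hx).differentiableAt (by simp)).hasDerivAt

lemma SD.comp {U V W : Set ℝ} {f g : ℝ → ℝ} (hg : SD V W g) (hf : SD U V f) :
    SD U W (g ∘ f) := by
  refine ⟨fun x hx => (hg.1 _ (hf.2.1 hx)).comp x (hf.1 x hx), hg.2.1.comp hf.2.1, fun x hx => ?_⟩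
  rw [((hg.hasDerivAt (hf.2.1 hx)).comp x (hf.hasDerivAt hx)).deriv]
  exact mul_pos (hg.2.2 _ (hf.2.1 hx)) (hf.2.2 x hx)

lemma SD.iterate {U : Set ℝ} {f : ℝ → ℝ} (hf : SD U U f) (n : ℕ) : SD U U (f^[n]) := by
  induction n with
  | zero => exact ⟨fun x _ => contDiffAt_id, fun x hx => hx, fun x _ => by simp⟩
  | succ n ih => rw [Function.iterate_succ]; exact ih.comp hf

lemma SD.strictMonoOn {U V : Set ℝ} (hU : IsOpen U) (hc : U.OrdConnected) {f : ℝ → ℝ}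
    (hf : SD U V f) : StrictMonoOn f U :=
  strictMonoOn_of_deriv_pos hc.convex (fun x hx => (hf.1 x hx).continuousAt.continuousWithinAt)
    (by rw [hU.interior_eq]; exact hf.2.2)

lemma SD.inv {U V : Set ℝ} (hU : IsOpen U) {f g : ℝ → ℝ} (hf : SD U V f)
    (hb : BijOn f U V) (hg : LeftInvOn g f U) : SD V U g := by
  have hs : ∀ y ∈ V, ContDiffAt ℝ (⊤ : ℕ∞) g y := by
    intro y hy
    obtain ⟨x, hx, rfl⟩ := hb.surjOn hy
    have hd := hf.hasDerivAt hx
    have hd' := hd.hasFDerivAt_equiv (hf.2.2 x hx).ne'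
    set e := (hf.1 x hx).toOpenPartialHomeomorph f hd' (by simp) with he
    have hxs : x ∈ e.source := (hf.1 x hx).mem_toOpenPartialHomeomorph_source hd' (by simp)
    have hcoe : (e : ℝ → ℝ) = f := rfl
    have hyt : f x ∈ e.target := e.map_source hxs
    have hsx : e.symm (f x) = x := e.left_inv hxs
    have hsm : ContDiffAt ℝ (⊤ : ℕ∞) e.symm (f x) := by
      apply e.contDiffAt_symm hyt (f₀' := ContinuousLinearEquiv.unitsEquivAut ℝ
        (Units.mk0 (deriv f x) (hf.2.2 x hx).ne'))
      · rw [hsx]; exact hd'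
      · rw [hsx]; exact hf.1 x hx
    refine hsm.congr_of_eventuallyEq ?_
    have h1 : ∀ᶠ z in nhds (f x), e.symm z ∈ U := by
      apply hsm.continuousAt.eventually_mem
      rw [hsx]; exact hU.mem_nhds hx
    filter_upwards [h1, e.open_target.mem_nhds hyt] with z hz hzt
    have h2 : f (e.symm z) = z := e.right_inv hzt
    rw [← hg hz, h2]
  refine ⟨hs, ?_, ?_⟩
  · intro y hy
    obtain ⟨x, hx, rfl⟩ := hb.surjOn hy
    rw [hg hx]; exact hx
  · intro y hy
    obtain ⟨x, hx, rfl⟩ := hb.surjOn hy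
    have h1 := ((hs _ hy).differentiableAt (by simp)).hasDerivAt.comp x (hf.hasDerivAt hx)
    have h2 : HasDerivAt (g ∘ f) 1 x := by
      refine (hasDerivAt_id x).congr_of_eventuallyEq ?_
      filter_upwards [hU.mem_nhds hx] with z hz
      exact hg hz
    have h3 := h1.unique h2
    have h4 := hf.2.2 x hx
    by_contra hcon
    nlinarith [not_lt.1 hcon]

lemma st_deriv (x : ℝ) : 0 ≤ deriv Real.smoothTransition x ∧
    (0 < x → x < 1 → 0 < deriv Real.smoothTransition x) := by
  have he : ∀ x, HasDerivAt expNegInvGlue ((x⁻¹)^2 * expNegInvGlue x) x := by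
    intro x
    simpa using expNegInvGlue.hasDerivAt_polynomial_eval_inv_mul 1 x
  refine ⟨Real.smoothTransition.monotone.deriv_nonneg, fun h0 h1 => ?_⟩
  have h2 : HasDerivAt (fun x : ℝ => expNegInvGlue (1 - x)) _ x :=
    (he (1 - x)).comp x ((hasDerivAt_id x).const_sub 1)
  have hp := Real.smoothTransition.pos_denom x
  have h3 : HasDerivAt Real.smoothTransition _ x := (he x).div ((he x).add h2) hp.ne'
  rw [h3.deriv]
  apply div_pos _ (by exact pow_pos hp 2)
  have a1 := expNegInvGlue.pos_of_pos h0
  have a2 := expNegInvGlue.pos_of_pos (sub_pos.2 h1)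
  have b1 : 0 < (x⁻¹)^2 := by positivity
  have b2 : 0 < ((1-x)⁻¹)^2 := by have := sub_pos.2 h1; positivity
  have := mul_pos (mul_pos b1 a1) a2
  have := mul_pos (mul_pos b2 a2) a1
  nlinarith

lemma exists_S {a b : ℝ} (hab : a < b) : ∃ S : ℝ → ℝ, ContDiff ℝ (⊤ : ℕ∞) S ∧
    (∀ x ≤ a, S x = 0) ∧ (∀ x, b ≤ x → S x = 1) ∧ (∀ x, 0 ≤ deriv S x) ∧
    (∀ x, a < x → x < b → 0 < deriv S x) := by
  have hba : 0 < b - a := sub_pos.2 hab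
  have hd : ∀ x, HasDerivAt (fun x => Real.smoothTransition ((x - a) / (b - a)))
      (deriv Real.smoothTransition ((x - a) / (b - a)) * (1 / (b - a))) x := by
    intro x
    have h1 : HasDerivAt Real.smoothTransition _ ((x - a) / (b - a)) :=
      (Real.smoothTransition.contDiffAt (n := 1)).differentiableAt (by simp) |>.hasDerivAt
    exact h1.comp x (((hasDerivAt_id x).sub_const a).div_const (b - a))
  refine ⟨fun x => Real.smoothTransition ((x - a) / (b - a)), ?_, ?_, ?_, ?_, ?_⟩
  · exact Real.smoothTransition.contDiff.comp (by fun_prop)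
  · intro x hx
    exact Real.smoothTransition.zero_of_nonpos
      (div_nonpos_of_nonpos_of_nonneg (by linarith) hba.le)
  · intro x hx
    exact Real.smoothTransition.one_of_one_le ((one_le_div hba).2 (by linarith))
  · intro x
    rw [(hd x).deriv]
    exact mul_nonneg (st_deriv _).1 (by positivity)
  · intro x h1 h2
    rw [(hd x).deriv]
    exact mul_pos ((st_deriv _).2 (div_pos (by linarith) hba)
      ((div_lt_one hba).2 (by linarith))) (by positivity)

lemma escape {I : Set ℝ} (hc : I.OrdConnected) {f : ℝ → ℝ} (hf : SD I I f)
    (hlt : ∀ x ∈ I, x < f x) {x c : ℝ} (hx : x ∈ I) (hcI : c ∈ I) : ∃ N, c < f^[N] x := by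
  by_contra! hcon
  have hmem : ∀ n, f^[n] x ∈ I := fun n => (hf.iterate n).2.1 hx
  have hmono : Monotone (fun n => f^[n] x) := by
    apply monotone_nat_of_le_succ
    intro n
    rw [Function.iterate_succ_apply']
    exact (hlt _ (hmem n)).le
  have hlim := tendsto_atTop_ciSup hmono ⟨c, by rintro _ ⟨n, rfl⟩; exact hcon n⟩
  set L := ⨆ n, f^[n] x
  have h1 : L ≤ c := le_of_tendsto' hlim hcon
  have h2 : x ≤ L := ge_of_tendsto' hlim (fun n => hmono (Nat.zero_le n))
  have hL : L ∈ I := hc.out hx hcI ⟨h2, h1⟩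
  have h3 := ((hf.1 L hL).continuousAt.tendsto).comp hlim
  have h4 := (Filter.tendsto_add_atTop_iff_nat 1).2 hlim
  have h5 : f L = L := by
    refine tendsto_nhds_unique h3 (h4.congr fun n => ?_)
    simp [Function.iterate_succ_apply']
  exact (hlt L hL).ne' h5

lemma core {I : Set ℝ} (hI : IsOpen I) (hc : I.OrdConnected) (hne : I.Nonempty) {f : ℝ → ℝ}
    (hf : SD I I f) (hb : BijOn f I I) (hlt : ∀ x ∈ I, x < f x) :
    ∃ φ : ℝ → ℝ, SD I univ φ ∧ BijOn φ I univ ∧ ∀ x ∈ I, φ (f x) = φ x + 1 := by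
  obtain ⟨x0, hx0⟩ := hne
  have hleft : ∀ x ∈ I, ∃ a ∈ I, a < x := by
    intro x hx
    obtain ⟨y, hy, rfl⟩ := hb.surjOn hx
    exact ⟨y, hy, hlt y hy⟩
  have hfx0 := hf.2.1 hx0
  obtain ⟨a, ha, hax⟩ := hleft x0 hx0
  obtain ⟨b, hbI, hxb⟩ : ∃ b ∈ I, f x0 < b := ⟨f (f x0), hf.2.1 hfx0, hlt _ hfx0⟩
  have hab : a < b := hax.trans ((hlt x0 hx0).trans hxb)
  obtain ⟨S, hS, hSa, hSb, hSd, hSp⟩ := exists_S hab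
  set F := Function.invFunOn f I with hF
  have hFl : LeftInvOn F f I := hb.injOn.leftInvOn_invFunOn
  have hFs : SD I I F := hf.inv hI hb hFl
  have hFr : ∀ x ∈ I, f (F x) = x := by
    intro x hx
    obtain ⟨y, hy, rfl⟩ := hb.surjOn hx
    rw [hFl hy]
  have hmono : ∀ n, StrictMonoOn (f^[n]) I := fun n => (hf.iterate n).strictMonoOn hI hc
  have hFmono : ∀ n, StrictMonoOn (F^[n]) I := fun n => (hFs.iterate n).strictMonoOn hI hc
  have hmem : ∀ n, ∀ x ∈ I, f^[n] x ∈ I := fun n x hx => (hf.iterate n).2.1 hx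
  have hFmem : ∀ n, ∀ x ∈ I, F^[n] x ∈ I := fun n x hx => (hFs.iterate n).2.1 hx
  have hinv : ∀ n, ∀ x ∈ I, F^[n] (f^[n] x) = x := by
    intro n
    induction n with
    | zero => intro x _; rfl
    | succ n ih =>
      intro x hx
      rw [Function.iterate_succ_apply, Function.iterate_succ_apply', hFl (hmem n x hx), ih x hx]
  have hup : ∀ x ∈ I, Monotone (fun n => f^[n] x) := by
    intro x hx
    apply monotone_nat_of_le_succ
    intro n
    rw [Function.iterate_succ_apply']
    exact (hlt _ (hmem n x hx)).le
  have hdown : ∀ x ∈ I, Antitone (fun n => F^[n] x) := by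
    intro x hx
    apply antitone_nat_of_succ_le
    intro n
    rw [Function.iterate_succ_apply']
    have := hlt _ (hFs.2.1 (hFmem n x hx))
    rw [hFr _ (hFmem n x hx)] at this
    exact this.le
  let T : ℕ → ℝ → ℝ := fun n x => S (F^[n+1] x) + (S (f^[n] x) - 1)
  let P : ℕ → ℝ → ℝ := fun N x => ∑ n ∈ Finset.range N, T n x
  let φ : ℝ → ℝ := fun x => ∑' n, T n x
  -- local finiteness
  have hloc : ∀ x ∈ I, ∃ N, ∀ᶠ y in nhds x, y ∈ I ∧ ∀ n ≥ N, F^[n] y ≤ a ∧ b ≤ f^[n] y := by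
    intro x hx
    obtain ⟨c, hcI, hcx⟩ := hleft x hx
    have hdI : f x ∈ I := hf.2.1 hx
    obtain ⟨N1, h1⟩ := escape hc hf hlt hcI hbI
    obtain ⟨N2, h2⟩ := escape hc hf hlt ha hdI
    refine ⟨max N1 N2, ?_⟩
    filter_upwards [Ioo_mem_nhds hcx (hlt x hx)] with y hy
    have hyI : y ∈ I := hc.out hcI hdI ⟨hy.1.le, hy.2.le⟩
    refine ⟨hyI, fun n hn => ⟨?_, ?_⟩⟩
    · have h3 : F^[n] y ≤ F^[N2] y := hdown y hyI ((le_max_right _ _).trans hn)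
      have h4 : F^[N2] y ≤ F^[N2] (f^[N2] a) :=
        (hFmono N2).monotoneOn hyI (hmem _ a ha) (hy.2.le.trans h2.le)
      rw [hinv _ a ha] at h4
      exact h3.trans h4
    · have h3 : f^[N1] y ≤ f^[n] y := hup y hyI ((le_max_left _ _).trans hn)
      have h4 : f^[N1] c ≤ f^[N1] y := (hmono N1).monotoneOn hcI hyI hy.1.le
      linarith
  have hφ : ∀ x ∈ I, ∃ N, ∀ M ≥ N, ∀ᶠ y in nhds x, φ y = P M y := by
    intro x hx
    obtain ⟨N, hN⟩ := hloc x hx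
    refine ⟨N, fun M hM => ?_⟩
    filter_upwards [hN] with y hy
    apply tsum_eq_sum
    intro n hn
    have hn : M ≤ n := by simpa using hn
    have h1 := (hy.2 (n+1) (by omega)).1
    have h2 := (hy.2 n (by omega)).2
    simp only [T]
    rw [hSa _ h1, hSb _ h2]; norm_num
  have hSD : ∀ y, HasDerivAt S (deriv S y) y := fun y =>
    (hS.contDiffAt.differentiableAt (by simp)).hasDerivAt
  have hTd : ∀ n, ∀ x ∈ I, HasDerivAt (T n)
      (deriv S (F^[n+1] x) * deriv (F^[n+1]) x + deriv S (f^[n] x) * deriv (f^[n]) x) x := by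
    intro n x hx
    exact ((hSD _).comp x ((hFs.iterate (n+1)).hasDerivAt hx)).add
      (((hSD _).comp x ((hf.iterate n).hasDerivAt hx)).sub_const 1)
  have hSDφ : SD I univ φ := by
    refine ⟨fun x hx => ?_, fun _ _ => mem_univ _, fun x hx => ?_⟩
    · obtain ⟨N, hN⟩ := hφ x hx
      refine ContDiffAt.congr_of_eventuallyEq ?_ (hN N le_rfl)
      apply ContDiffAt.sum
      intro n _
      exact (hS.contDiffAt.comp x ((hFs.iterate (n+1)).1 x hx)).add
        ((hS.contDiffAt.comp x ((hf.iterate n).1 x hx)).sub contDiffAt_const)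
    · obtain ⟨N, hN⟩ := hφ x hx
      have hit : ∃ k, (a < F^[k+1] x ∧ F^[k+1] x < b) ∨ (a < f^[k] x ∧ f^[k] x < b) := by
        classical
        rcases lt_or_ge x x0 with h | h
        · have hex : ∃ n, x0 ≤ f^[n] x := (escape hc hf hlt hx hx0).imp fun _ h => h.le
          have hs := Nat.find_spec hex
          have hm := fun m => Nat.find_min hex (m := m)
          rcases hk : Nat.find hex with _ | k
          · rw [hk] at hs; exact absurd hs (not_le.2 h)
          · rw [hk] at hs
            have := not_le.1 (hm k (by omega))
            refine ⟨k+1, Or.inr ⟨hax.trans_le hs, ?_⟩⟩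
            rw [Function.iterate_succ_apply']
            exact (hmono 1 (hmem k x hx) hx0 this).trans hxb
        · have hex : ∃ n, x < f^[n] x0 := escape hc hf hlt hx0 hx
          have hs := Nat.find_spec hex
          have hm := fun m => Nat.find_min hex (m := m)
          rcases hk : Nat.find hex with _ | k
          · rw [hk] at hs; exact absurd hs (not_lt.2 h)
          · rw [hk] at hs
            have h1 := not_lt.1 (hm k (by omega))
            have h2 := (hFmono k).monotoneOn (hmem k x0 hx0) hx h1
            rw [hinv k x0 hx0] at h2
            have h3 := (hFmono k) hx (hmem (k+1) x0 hx0) hs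
            rw [Function.iterate_succ_apply, hinv k _ hfx0] at h3
            rcases k with _ | j
            · exact ⟨0, Or.inr ⟨hax.trans_le h2, h3.trans hxb⟩⟩
            · exact ⟨j, Or.inl ⟨hax.trans_le h2, h3.trans hxb⟩⟩
      obtain ⟨k, hk⟩ := hit
      have hd : HasDerivAt (P (max N (k+1))) _ x :=
        HasDerivAt.fun_sum (fun n _ => hTd n x hx)
      rw [Filter.EventuallyEq.deriv_eq (hN _ (le_max_left N (k+1))), hd.deriv]
      have p1 : ∀ n, 0 < deriv (F^[n+1]) x := fun n => (hFs.iterate (n+1)).2.2 x hx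
      have p2 : ∀ n, 0 < deriv (f^[n]) x := fun n => (hf.iterate n).2.2 x hx
      apply Finset.sum_pos'
      · intro n _
        exact add_nonneg (mul_nonneg (hSd _) (p1 n).le) (mul_nonneg (hSd _) (p2 n).le)
      · refine ⟨k, by simp, ?_⟩
        rcases hk with hk | hk
        · exact add_pos_of_pos_of_nonneg (mul_pos (hSp _ hk.1 hk.2) (p1 k))
            (mul_nonneg (hSd _) (p2 k).le)
        · exact add_pos_of_nonneg_of_pos (mul_nonneg (hSd _) (p1 k).le)
            (mul_pos (hSp _ hk.1 hk.2) (p2 k))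
  have hPf : ∀ x ∈ I, ∀ N, P N (f x) = P N x + S (f^[N] x) - S (F^[N] x) := by
    intro x hx N
    induction N with
    | zero => simp [P]
    | succ N ih =>
      simp only [P] at ih ⊢
      rw [Finset.sum_range_succ, Finset.sum_range_succ, ih]
      simp only [T]
      rw [Function.iterate_succ_apply F N (f x), hFl hx, ← Function.iterate_succ_apply f N x]
      ring
  have heq : ∀ x ∈ I, φ (f x) = φ x + 1 := by
    intro x hx
    obtain ⟨N1, h1⟩ := hφ x hx
    obtain ⟨N2, h2⟩ := hφ (f x) (hf.2.1 hx)
    obtain ⟨N3, h3⟩ := hloc x hx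
    let M := max N1 (max N2 N3)
    have e1 := (h1 M (by simp [M])).self_of_nhds
    have e2 := (h2 M (by simp [M])).self_of_nhds
    have e3 := h3.self_of_nhds.2 M (by simp [M])
    rw [e1, e2, hPf x hx, hSa _ e3.1, hSb _ e3.2]; ring
  refine ⟨φ, hSDφ, ⟨fun _ _ => mem_univ _, (hSDφ.strictMonoOn hI hc).injOn, ?_⟩, heq⟩
  intro y _
  have hcont : ContinuousOn φ I := fun x hx => (hSDφ.1 x hx).continuousAt.continuousWithinAt
  have hoc : (φ '' I).OrdConnected :=
    (hc.isPreconnected.image φ hcont).ordConnected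
  have hupn : ∀ n : ℕ, ∀ x ∈ I, φ (f^[n] x) = φ x + n := by
    intro n x hx
    induction n with
    | zero => simp
    | succ n ih =>
      rw [Function.iterate_succ_apply', heq _ (hmem n x hx), ih]; push_cast; ring
  have hdnn : ∀ n : ℕ, ∀ x ∈ I, φ (F^[n] x) = φ x - n := by
    intro n x hx
    induction n with
    | zero => simp
    | succ n ih =>
      have := heq _ (hFs.2.1 (hFmem n x hx))
      rw [hFr _ (hFmem n x hx), ih] at this
      rw [Function.iterate_succ_apply']; push_cast; linarith
  obtain ⟨n, hn⟩ := exists_nat_ge (|y - φ x0|)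
  have := abs_le.1 hn
  refine hoc.out (mem_image_of_mem φ (hFmem n x0 hx0)) (mem_image_of_mem φ (hmem n x0 hx0)) ⟨?_, ?_⟩
  · rw [hdnn n x0 hx0]; linarith
  · rw [hupn n x0 hx0]; linarith

lemma conj_up {I : Set ℝ} (hI : IsOpen I) (hc : I.OrdConnected) (hne : I.Nonempty) {f g : ℝ → ℝ}
    (hf : SD I I f) (hg : SD I I g) (hfb : BijOn f I I) (hgb : BijOn g I I)
    (hfl : ∀ x ∈ I, x < f x) (hgl : ∀ x ∈ I, x < g x) :
    ∃ h : ℝ → ℝ, SD I I h ∧ BijOn h I I ∧ ∀ x ∈ I, h (f x) = g (h x) := by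
  obtain ⟨φ, h1, b1, e1⟩ := core hI hc hne hf hfb hfl
  obtain ⟨ψ, h2, b2, e2⟩ := core hI hc hne hg hgb hgl
  have hl : LeftInvOn (Function.invFunOn ψ I) ψ I := b2.injOn.leftInvOn_invFunOn
  have hs := h2.inv hI b2 hl
  have hb : BijOn (Function.invFunOn ψ I) univ I := by
    refine ⟨hs.2.1, ?_, ?_⟩
    · intro y _ z _ hyz
      obtain ⟨u, hu, rfl⟩ := b2.surjOn (mem_univ y)
      obtain ⟨v, hv, rfl⟩ := b2.surjOn (mem_univ z)
      rw [hl hu, hl hv] at hyz; rw [hyz]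
    · intro x hx
      exact ⟨ψ x, mem_univ _, hl hx⟩
  refine ⟨_, hs.comp h1, hb.comp b1, fun x hx => ?_⟩
  simp only [Function.comp]
  obtain ⟨u, hu, hux⟩ := b2.surjOn (mem_univ (φ x))
  rw [e1 x hx, ← hux, hl hu, ← e2 u hu, hl (hg.2.1 hu)]

lemma SD.neg {I : Set ℝ} {f : ℝ → ℝ} (hf : SD I I f) : SD (-I) (-I) (fun x => -f (-x)) := by
  have hd : ∀ x ∈ -I, HasDerivAt (fun x => -f (-x)) (deriv f (-x)) x := by
    intro x hx
    have := ((hf.hasDerivAt hx).comp x (hasDerivAt_neg x)).neg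
    rw [mul_neg_one, neg_neg] at this
    exact this
  refine ⟨fun x hx => ((hf.1 _ hx).comp x contDiffAt_id.neg).neg, ?_, ?_⟩
  · intro x hx
    simpa using hf.2.1 hx
  · intro x hx
    rw [(hd x hx).deriv]; exact hf.2.2 _ hx

lemma bij_neg {I : Set ℝ} {f : ℝ → ℝ} (hf : BijOn f I I) :
    BijOn (fun x => -f (-x)) (-I) (-I) := by
  refine ⟨fun x hx => by simpa using hf.mapsTo hx, ?_, ?_⟩
  · intro x hx y hy hxy
    have := hf.injOn hx hy (neg_injective hxy)
    exact neg_injective this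
  · intro y hy
    obtain ⟨x, hx, hxy⟩ := hf.surjOn hy
    exact ⟨-x, by simpa using hx, by simp [hxy]⟩

lemma conj_down {I : Set ℝ} (hI : IsOpen I) (hc : I.OrdConnected) (hne : I.Nonempty)
    {f g : ℝ → ℝ}
    (hf : SD I I f) (hg : SD I I g) (hfb : BijOn f I I) (hgb : BijOn g I I)
    (hfl : ∀ x ∈ I, f x < x) (hgl : ∀ x ∈ I, g x < x) :
    ∃ h : ℝ → ℝ, SD I I h ∧ BijOn h I I ∧ ∀ x ∈ I, h (f x) = g (h x) := by
  have hc' : (-I).OrdConnected := by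
    refine ⟨fun x hx y hy z hz => ?_⟩
    exact hc.out hy hx ⟨neg_le_neg hz.2, neg_le_neg hz.1⟩
  obtain ⟨h, h1, h2, h3⟩ := conj_up hI.neg hc' hne.neg hf.neg hg.neg (bij_neg hfb) (bij_neg hgb)
    (fun x hx => by have := hfl _ hx; linarith) (fun x hx => by have := hgl _ hx; linarith)
  have h1' := h1.neg
  have h2' := bij_neg h2
  rw [neg_neg] at h1' h2'
  refine ⟨_, h1', h2', fun x hx => ?_⟩
  have := h3 (-x) (by simpa using hx)
  simp only [neg_neg] at this
  rw [this, neg_neg]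

lemma side {I : Set ℝ} (hc : I.OrdConnected) {f : ℝ → ℝ} (hf : ContinuousOn f I)
    (hfree : ∀ x ∈ I, f x ≠ x) : (∀ x ∈ I, x < f x) ∨ (∀ x ∈ I, f x < x) := by
  by_contra! hcon
  obtain ⟨⟨x, hx, h1⟩, ⟨y, hy, h2⟩⟩ := hcon
  obtain ⟨z, hz, h⟩ := hc.isPreconnected.intermediate_value₂ hx hy hf continuousOn_id h1 h2
  exact hfree z hz h

/-- Sternberg: two fixed-point-free orientation-preserving smooth diffeomorphisms of an
open interval `I` are conjugate in `Diffeo⁺(I)` iff their graphs lie on the same side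
of the diagonal. -/
theorem stmt_5 (I : Set ℝ) (hIopen : IsOpen I) (hIconn : I.OrdConnected)
    (hIne : I.Nonempty)
    (f g : ℝ → ℝ)
    (hfs : ContDiffOn ℝ (⊤ : ℕ∞) f I) (hgs : ContDiffOn ℝ (⊤ : ℕ∞) g I)
    (hfb : BijOn f I I) (hgb : BijOn g I I)
    (hfm : StrictMonoOn f I) (hgm : StrictMonoOn g I)
    (hfd : ∀ x ∈ I, 0 < deriv f x) (hgd : ∀ x ∈ I, 0 < deriv g x)
    (hffree : ∀ x ∈ I, f x ≠ x) (hgfree : ∀ x ∈ I, g x ≠ x) :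
    (∃ h : ℝ → ℝ, ContDiffOn ℝ (⊤ : ℕ∞) h I ∧ BijOn h I I ∧ StrictMonoOn h I ∧
        (∀ x ∈ I, 0 < deriv h x) ∧ ∀ x ∈ I, h (f x) = g (h x)) ↔
      ((∀ x ∈ I, x < f x) ∧ (∀ x ∈ I, x < g x)) ∨
      ((∀ x ∈ I, f x < x) ∧ (∀ x ∈ I, g x < x)) := by
  have mk : ∀ u : ℝ → ℝ, ContDiffOn ℝ (⊤ : ℕ∞) u I → BijOn u I I → (∀ x ∈ I, 0 < deriv u x) →
      SD I I u := fun u h1 h2 h3 =>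
    ⟨fun x hx => h1.contDiffAt (hIopen.mem_nhds hx), h2.mapsTo, h3⟩
  constructor
  · rintro ⟨h, -, hb, hm, -, he⟩
    rcases side hIconn hfs.continuousOn hffree with H | H
    · refine Or.inl ⟨H, fun y hy => ?_⟩
      obtain ⟨x, hx, rfl⟩ := hb.surjOn hy
      rw [← he x hx]
      exact hm hx (hfb.mapsTo hx) (H x hx)
    · refine Or.inr ⟨H, fun y hy => ?_⟩
      obtain ⟨x, hx, rfl⟩ := hb.surjOn hy
      rw [← he x hx]
      exact hm (hfb.mapsTo hx) hx (H x hx)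
  · intro H
    have hf := mk f hfs hfb hfd
    have hg := mk g hgs hgb hgd
    have : ∃ h : ℝ → ℝ, SD I I h ∧ BijOn h I I ∧ ∀ x ∈ I, h (f x) = g (h x) := by
      rcases H with H | H
      · exact conj_up hIopen hIconn hIne hf hg hfb hgb H.1 H.2
      · exact conj_down hIopen hIconn hIne hf hg hfb hgb H.1 H.2
    obtain ⟨h, h1, h2, h3⟩ := this
    exact ⟨h, fun x hx => (h1.1 x hx).contDiffWithinAt, h2, h1.strictMonoOn hIopen hIconn,
      h1.2.2, h3⟩
end

section
/- Given a point a ∈ ℝ, a real number λ, and a formal power series P = a₁X + a₂X² + ⋯ with a₁ > 0, there exists an orientation-preserving smooth diffeomorphism f of ℝ with f(a) = λ and whose Taylor series at a (with constant term removed, i.e. the series of f(a+t)-f(a) in t) equals P. -/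
open Filter Topology in
theorem borel_term (n : ℕ) (b δ : ℝ) (hδ : 0 < δ) :
    ∃ F : ℝ → ℝ, ContDiff ℝ (⊤ : ℕ∞) F ∧
      (∀ k : ℕ, ∃ C : ℝ, ∀ x, |iteratedDeriv k F x| ≤ C) ∧
      (∀ k : ℕ, k ≤ n → ∀ x, |iteratedDeriv k F x| ≤ δ) ∧
      (∀ k : ℕ, iteratedDeriv k F 0 = if k = n + 1 then ((n + 1).factorial : ℝ) * b else 0) := by
  let χ : ContDiffBump (0 : ℝ) := default
  let h : ℝ → ℝ := fun y => y ^ (n + 1) * χ y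
  have hh : ContDiff ℝ (⊤ : ℕ∞) h := (contDiff_id.pow _).mul χ.contDiff
  have hhc : HasCompactSupport h := χ.hasCompactSupport.mul_left
  have hb : ∀ k : ℕ, ∃ C : ℝ, ∀ x, |iteratedDeriv k h x| ≤ C := by
    intro k
    obtain ⟨C, hC⟩ := (hh.continuous_iteratedFDeriv (m := k)
      (by exact_mod_cast le_top)).bounded_above_of_compact_support (hhc.iteratedFDeriv k)
    refine ⟨C, fun x => ?_⟩
    have := hC x
    rwa [norm_iteratedFDeriv_eq_norm_iteratedDeriv, Real.norm_eq_abs] at this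
  choose M hM using hb
  have hM0 : ∀ k, 0 ≤ M k := fun k => (abs_nonneg _).trans (hM k 0)
  let S : ℝ := ∑ k ∈ Finset.range (n + 1), M k
  have hS : ∀ k, k ≤ n → M k ≤ S := fun k hk =>
    Finset.single_le_sum (f := M) (fun i _ => hM0 i) (Finset.mem_range.2 (by omega))
  have hS0 : 0 ≤ S := Finset.sum_nonneg fun i _ => hM0 i
  let c : ℝ := 1 + |b| * S / δ
  have hc1 : 1 ≤ c := by
    have : 0 ≤ |b| * S / δ := by positivity
    simp only [c]; linarith
  have hc0 : 0 < c := by linarith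
  have hcS : |b| * S ≤ δ * c := by
    have : δ * c = δ + |b| * S := by simp only [c]; field_simp
    linarith
  let F : ℝ → ℝ := fun x => (b / c ^ (n + 1)) * h (c * x)
  have hder : ∀ k x, iteratedDeriv k F x = (b / c ^ (n + 1)) * (c ^ k * iteratedDeriv k h (c * x)) := by
    intro k x
    have h1 : ContDiff ℝ k h := hh.of_le (by exact_mod_cast le_top)
    simp only [F]
    rw [iteratedDeriv_const_mul_field, iteratedDeriv_comp_const_mul h1]
  have habs : ∀ k x, |iteratedDeriv k F x| ≤ |b| / c ^ (n + 1) * (c ^ k * M k) := by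
    intro k x
    rw [hder, abs_mul, abs_div, abs_mul, abs_of_pos (pow_pos hc0 _), abs_of_pos (pow_pos hc0 _)]
    gcongr
    exact hM k _
  refine ⟨F, contDiff_const.mul (hh.comp (contDiff_const.mul contDiff_id)),
    fun k => ⟨_, habs k⟩, ?_, ?_⟩
  · intro k hk x
    refine (habs k x).trans ?_
    have h1 : c ^ k * M k ≤ c ^ n * S := by
      exact mul_le_mul (pow_le_pow_right₀ hc1 hk) (hS k hk) (hM0 k) (by positivity)
    calc |b| / c ^ (n + 1) * (c ^ k * M k) ≤ |b| / c ^ (n + 1) * (c ^ n * S) := by gcongr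
      _ = |b| * S / c := by field_simp; ring
      _ ≤ δ := by rw [div_le_iff₀ hc0]; exact hcS
  · intro k
    have he : h =ᶠ[𝓝 0] fun y => y ^ (n + 1) := by
      filter_upwards [χ.eventuallyEq_one] with y hy
      simp [h, hy]
    rw [hder, mul_zero, he.iteratedDeriv_eq k, iteratedDeriv_fun_pow_zero]
    by_cases hk : k = n + 1
    · subst hk; simp; field_simp
    · simp [hk]

open Filter Topology in
theorem borel_small (b : ℕ → ℝ) (δ : ℝ) (hδ : 0 < δ) :
    ∃ g : ℝ → ℝ, ContDiff ℝ (⊤ : ℕ∞) g ∧ (∀ x, |g x| ≤ δ) ∧ g 0 = 0 ∧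
      ∀ n : ℕ, iteratedDeriv (n + 1) g 0 = ((n + 1).factorial : ℝ) * b n := by
  choose F hF hFC hFd hF0 using fun n : ℕ =>
    borel_term n (b n) (δ / 2 / 2 ^ n) (by positivity)
  choose C hC using hFC
  let v : ℕ → ℕ → ℝ := fun k i => if k ≤ i then δ / 2 / 2 ^ i else C i k
  have hv : ∀ k : ℕ, (k : ℕ∞) ≤ (⊤ : ℕ∞) → Summable (v k) := by
    intro k _
    refine (summable_geometric_two' δ).congr_cofinite ?_
    rw [Nat.cofinite_eq_atTop]
    filter_upwards [eventually_ge_atTop k] with i hi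
    simp [v, hi]
  have hb : ∀ (k : ℕ) (i : ℕ) (x : ℝ), (k : ℕ∞) ≤ (⊤ : ℕ∞) →
      ‖iteratedFDeriv ℝ k (F i) x‖ ≤ v k i := by
    intro k i x _
    rw [norm_iteratedFDeriv_eq_norm_iteratedDeriv, Real.norm_eq_abs]
    by_cases hk : k ≤ i
    · simp only [v, hk, if_true]; exact hFd i k hk x
    · simp only [v, hk, if_false]; exact hC i k x
  have hder : ∀ k : ℕ, iteratedDeriv k (fun x => ∑' i, F i x) 0 = ∑' i, iteratedDeriv k (F i) 0 := by
    intro k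
    have hs : Summable fun i => iteratedFDeriv ℝ k (F i) 0 :=
      .of_norm_bounded (hv k le_top) fun i => hb k i 0 le_top
    rw [iteratedDeriv_eq_iteratedFDeriv, iteratedFDeriv_tsum_apply hF hv hb le_top,
      ContinuousMultilinearMap.tsum_eval hs]
    simp only [iteratedDeriv_eq_iteratedFDeriv]
  refine ⟨fun x => ∑' i, F i x, contDiff_tsum hF hv hb, ?_, ?_, ?_⟩
  · intro x
    have h1 : HasSum (fun n : ℕ => δ / 2 / 2 ^ n) δ := hasSum_geometric_two' δ
    rw [← Real.norm_eq_abs]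
    refine tsum_of_norm_bounded h1 fun i => ?_
    simpa using hFd i 0 (Nat.zero_le _) x
  · have := hder 0
    simpa [hF0] using this
  · intro n
    rw [hder]
    simp only [hF0]
    rw [tsum_eq_single n]
    · simp
    · intro m hm
      rw [if_neg (by omega)]

/-- Given `a ∈ ℝ`, `λ ∈ ℝ`, and a formal power series `P = a₁X + a₂X² + ⋯` with
`a₁ > 0`, there is an orientation-preserving smooth diffeomorphism `f` of `ℝ` with
`f a = λ` and Taylor series `T_a f = P` (i.e. `f⁽ⁿ⁾(a) = n!·aₙ` for `n ≥ 1`). -/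
theorem stmt_12 (a lam : ℝ) (P : ℕ → ℝ) (hP1 : 0 < P 1) :
    ∃ f : ℝ → ℝ, ContDiff ℝ (⊤ : ℕ∞) f ∧ Function.Bijective f ∧ StrictMono f ∧
      (∀ x : ℝ, 0 < deriv f x) ∧ f a = lam ∧
      ∀ n : ℕ, 1 ≤ n → iteratedDeriv n f a = n.factorial * P n := by
  obtain ⟨g, hg, hgb, hg0, hgd⟩ := borel_small (fun n => (n + 2) * P (n + 2)) (P 1 / 2) (by linarith)
  let G : ℝ → ℝ := fun x => P 1 + g (x - a)
  have hG : ContDiff ℝ (⊤ : ℕ∞) G :=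
    contDiff_const.add (hg.comp (contDiff_id.sub contDiff_const))
  have hGc : Continuous G := hG.continuous
  let f : ℝ → ℝ := fun x => lam + ∫ t in a..x, G t
  have hfd : ∀ x, HasDerivAt f (G x) x := fun x =>
    (hGc.integral_hasStrictDerivAt a x).hasDerivAt.const_add lam
  have hdf : deriv f = G := funext fun x => (hfd x).deriv
  have hGpos : ∀ x, P 1 / 2 ≤ G x := by
    intro x
    have := (abs_le.1 (hgb (x - a))).1
    simp only [G]; linarith
  have hpos : ∀ x, 0 < deriv f x := fun x => by
    rw [hdf]; linarith [hGpos x]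
  have hmono : StrictMono f := strictMono_of_deriv_pos hpos
  have hfdiff : Differentiable ℝ f := fun x => (hfd x).differentiableAt
  have hm2 : Monotone fun x => f x - P 1 / 2 * x := by
    have hd : ∀ x, HasDerivAt (fun x => f x - P 1 / 2 * x) (G x - P 1 / 2 * 1) x := fun x =>
      (hfd x).sub ((hasDerivAt_id x).const_mul (P 1 / 2))
    refine monotone_of_deriv_nonneg (fun x => (hd x).differentiableAt) fun x => ?_
    rw [(hd x).deriv]; linarith [hGpos x]
  have hsurj : Function.Surjective f := by
    refine hfdiff.continuous.surjective ?_ ?_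
    · refine Filter.tendsto_atTop_mono' _ ?_ (Filter.tendsto_atTop_add_const_left _ (f 0)
        (Filter.tendsto_id.const_mul_atTop (half_pos hP1)))
      filter_upwards [Filter.eventually_ge_atTop 0] with x hx
      have := hm2 hx
      simp at this ⊢; linarith
    · refine Filter.tendsto_atBot_mono' _ ?_ (Filter.tendsto_atBot_add_const_left _ (f 0)
        (Filter.tendsto_id.const_mul_atBot (half_pos hP1)))
      filter_upwards [Filter.eventually_le_atBot 0] with x hx
      have := hm2 hx
      simp at this ⊢; linarith
  refine ⟨f, contDiff_infty_iff_deriv.2 ⟨hfdiff, hdf ▸ hG⟩, ⟨hmono.injective, hsurj⟩, hmono, hpos,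
    by simp [f], ?_⟩
  intro n hn
  obtain ⟨m, rfl⟩ : ∃ m, n = m + 1 := ⟨n - 1, by omega⟩
  rw [iteratedDeriv_succ', hdf]
  rcases m with _ | m
  · simp [G, hg0]
  · simp only [G]
    rw [iteratedDeriv_const_add (Nat.succ_pos m), iteratedDeriv_comp_sub_const]
    simp only [sub_self]
    rw [hgd m, Nat.factorial_succ (m + 1)]
    push_cast
    ring
end

section
/- Given real numbers a < b and formal power series P = a₁X + ⋯ and Q = b₁X + ⋯ with a₁ > 0 and b₁ > 0, there exists a smooth diffeomorphism f of ℝ with f(a) = a, f(b) = b, whose truncated Taylor series at a equals P and whose truncated Taylor series at b equals Q. -/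
/-- Borel's theorem at `0`. -/
theorem borel_zero (c : ℕ → ℝ) : ∃ F : ℝ → ℝ, ContDiff ℝ (⊤ : ℕ∞) F ∧
    ∀ k : ℕ, iteratedDeriv k F 0 = k.factorial * c k := by
  let χ : ContDiffBump (0 : ℝ) := ⟨1, 2, one_pos, one_lt_two⟩
  let θ : ℕ → ℝ → ℝ := fun n y => y ^ n * χ y
  have hθ : ∀ n, ContDiff ℝ (⊤ : ℕ∞) (θ n) := fun n =>
    (contDiff_id.pow n).mul χ.contDiff
  have hθc : ∀ n, HasCompactSupport (θ n) := fun n =>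
    χ.hasCompactSupport.mul_left
  have hM : ∀ n k : ℕ, ∃ C, ∀ x, ‖iteratedFDeriv ℝ k (θ n) x‖ ≤ C := fun n k =>
    ((hθc n).iteratedFDeriv k).exists_bound_of_continuous
      ((hθ n).continuous_iteratedFDeriv (by exact_mod_cast le_top))
  choose C hC using hM
  have hC0 : ∀ n k, 0 ≤ C n k := fun n k => (norm_nonneg _).trans (hC n k 0)
  let M : ℕ → ℝ := fun n => ∑ k ∈ Finset.range n, C n k
  have hM0 : ∀ n, 0 ≤ M n := fun n => Finset.sum_nonneg fun k _ => hC0 n k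
  let L : ℕ → ℝ := fun n => 1 + |c n| * M n * 2 ^ n
  have hL1 : ∀ n, 1 ≤ L n := fun n => by
    have := hM0 n
    have : 0 ≤ |c n| * M n * 2 ^ n := by positivity
    simp only [L]; linarith
  have hL0 : ∀ n, 0 < L n := fun n => zero_lt_one.trans_le (hL1 n)
  let φ : ℕ → ℝ → ℝ := fun n x => (c n * (L n)⁻¹ ^ n) * θ n (L n * x)
  have hφ : ∀ n, ContDiff ℝ (⊤ : ℕ∞) (φ n) := fun n =>
    contDiff_const.mul ((hθ n).comp (contDiff_const.mul contDiff_id))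
  have hder : ∀ n k x, iteratedDeriv k (φ n) x =
      (c n * (L n)⁻¹ ^ n) * (L n ^ k * iteratedDeriv k (θ n) (L n * x)) := by
    intro n k x
    simp only [φ]
    rw [iteratedDeriv_const_mul_field, iteratedDeriv_comp_const_mul
      ((hθ n).of_le (by exact_mod_cast le_top))]
  have hb : ∀ n k x, ‖iteratedFDeriv ℝ k (φ n) x‖ ≤
      |c n| * (L n)⁻¹ ^ n * (L n ^ k * C n k) := by
    intro n k x
    rw [norm_iteratedFDeriv_eq_norm_iteratedDeriv, hder, norm_mul, norm_mul, norm_mul]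
    have h1 := hC n k (L n * x)
    rw [norm_iteratedFDeriv_eq_norm_iteratedDeriv] at h1
    have e1 : ‖(L n)⁻¹ ^ n‖ = (L n)⁻¹ ^ n :=
      Real.norm_of_nonneg (pow_nonneg (inv_nonneg.2 (hL0 n).le) _)
    have e2 : ‖L n ^ k‖ = L n ^ k := Real.norm_of_nonneg (pow_nonneg (hL0 n).le _)
    rw [e1, e2, Real.norm_eq_abs]
    have := hL0 n
    gcongr
  have hb2 : ∀ n k, k < n → |c n| * (L n)⁻¹ ^ n * (L n ^ k * C n k) ≤ (1 / 2) ^ n := by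
    intro n k hk
    have hp := hL0 n
    have h1 : (L n)⁻¹ ^ n * L n ^ k ≤ (L n)⁻¹ := by
      obtain ⟨j, rfl⟩ := Nat.exists_eq_add_of_lt hk
      have e : (L (k+j+1))⁻¹ ^ (k+j+1) * L (k+j+1) ^ k
          = (L (k+j+1))⁻¹ ^ j * (L (k+j+1))⁻¹ := by
        have : L (k+j+1) ≠ 0 := hp.ne'
        have h : (L (k+j+1))⁻¹ ^ k * L (k+j+1) ^ k = 1 := by
          rw [← mul_pow, inv_mul_cancel₀ this, one_pow]
        rw [pow_succ, pow_add]
        linear_combination ((L (k+j+1))⁻¹ ^ j * (L (k+j+1))⁻¹) * h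
      rw [e]
      exact mul_le_of_le_one_left (inv_nonneg.2 hp.le)
        (pow_le_one₀ (inv_nonneg.2 hp.le) (inv_le_one_of_one_le₀ (hL1 _)))
    have h2 : C n k ≤ M n :=
      Finset.single_le_sum (f := fun k => C n k) (fun i _ => hC0 n i) (Finset.mem_range.2 hk)
    calc |c n| * (L n)⁻¹ ^ n * (L n ^ k * C n k)
        = |c n| * ((L n)⁻¹ ^ n * L n ^ k) * C n k := by ring
      _ ≤ |c n| * (L n)⁻¹ * M n := by
          have := hC0 n k
          gcongr
      _ ≤ (1 / 2) ^ n := by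
          rw [one_div, inv_pow, mul_right_comm, ← div_eq_mul_inv, div_le_iff₀ hp,
            ← div_eq_inv_mul, le_div_iff₀ (by positivity)]
          simp only [L]; linarith
  let v : ℕ → ℕ → ℝ := fun k n =>
    if k < n then (1 / 2) ^ n else |c n| * (L n)⁻¹ ^ n * (L n ^ k * C n k)
  have hv : ∀ k : ℕ, (k : ℕ∞) ≤ (⊤ : ℕ∞) → Summable (v k) := by
    intro k _
    refine (summable_congr_cofinite ?_).1 summable_geometric_two
    rw [Nat.cofinite_eq_atTop]
    filter_upwards [Filter.eventually_gt_atTop k] with n hn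
    simp only [v, if_pos hn]
  have hfv : ∀ (k n : ℕ) (x : ℝ), (k : ℕ∞) ≤ (⊤ : ℕ∞) → ‖iteratedFDeriv ℝ k (φ n) x‖ ≤ v k n := by
    intro k n x _
    simp only [v]
    split_ifs with h
    · exact (hb n k x).trans (hb2 n k h)
    · exact hb n k x
  have hev : ∀ n k, iteratedDeriv k (φ n) 0 = if k = n then k.factorial * c n else 0 := by
    intro n k
    have : θ n =ᶠ[nhds 0] fun y => y ^ n := by
      filter_upwards [χ.eventuallyEq_one] with y hy
      simp only [θ, hy, Pi.one_apply, mul_one]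
    rw [hder, mul_zero, this.iteratedDeriv_eq, iteratedDeriv_fun_pow_zero]
    split_ifs with h
    · subst h
      have h : (L k)⁻¹ ^ k * L k ^ k = 1 := by
        rw [← mul_pow, inv_mul_cancel₀ (hL0 k).ne', one_pow]
      linear_combination (c k * k.factorial) * h
    · simp
  refine ⟨fun x => ∑' n, φ n x, contDiff_tsum hφ hv hfv, fun k => ?_⟩
  rw [iteratedDeriv_eq_iteratedFDeriv, iteratedFDeriv_tsum hφ hv hfv le_top]
  dsimp only
  rw [tsum_eq_single k, ← iteratedDeriv_eq_iteratedFDeriv, hev, if_pos rfl]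
  intro n hn
  rw [← norm_eq_zero, norm_iteratedFDeriv_eq_norm_iteratedDeriv, hev, if_neg hn.symm, norm_zero]

theorem borel_at (p : ℝ) (c : ℕ → ℝ) : ∃ F : ℝ → ℝ, ContDiff ℝ (⊤ : ℕ∞) F ∧
    ∀ k : ℕ, iteratedDeriv k F p = k.factorial * c k := by
  obtain ⟨F, hF, h⟩ := borel_zero c
  refine ⟨fun z => F (z - p), hF.comp (contDiff_id.sub contDiff_const), fun k => ?_⟩
  rw [iteratedDeriv_comp_sub_const]
  simp [h]

/-- The derivative of a diffeo germ, with bounds near the point. -/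
theorem germ_at (p : ℝ) (P : ℕ → ℝ) (hP1 : 0 < P 1) : ∃ F : ℝ → ℝ, ContDiff ℝ (⊤ : ℕ∞) F ∧
    (∀ k : ℕ, iteratedDeriv k F p = (k + 1).factorial * P (k + 1)) ∧
    ∃ δ > 0, ∀ x, |x - p| < δ → P 1 / 2 ≤ F x ∧ F x ≤ 2 * P 1 := by
  obtain ⟨F, hF, h⟩ := borel_at p (fun k => (k + 1) * P (k + 1))
  refine ⟨F, hF, fun k => ?_, ?_⟩
  · rw [h, Nat.factorial_succ]; push_cast; ring
  · have h0 : F p = P 1 := by simpa using h 0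
    have := hF.continuous.continuousAt (x := p)
    obtain ⟨δ, hδ, hh⟩ := Metric.continuousAt_iff.1 this (P 1 / 2) (by positivity)
    refine ⟨δ, hδ, fun x hx => ?_⟩
    have := hh (x := x) hx
    rw [h0, Real.dist_eq, abs_lt] at this
    constructor <;> linarith

theorem bump_integral_le {p : ℝ} (χ : ContDiffBump p) (a b : ℝ) (hab : a ≤ b) :
    ∫ x in a..b, χ x ≤ 2 * χ.rOut := by
  rw [intervalIntegral.integral_of_le hab]
  calc ∫ x in Set.Ioc a b, χ x ≤ ∫ x, χ x :=
        MeasureTheory.setIntegral_le_integral χ.integrable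
          (Filter.Eventually.of_forall fun x => χ.nonneg)
    _ ≤ MeasureTheory.volume.real (Metric.closedBall p χ.rOut) :=
        χ.integral_le_measure_closedBall _
    _ = 2 * χ.rOut := by
        rw [Real.volume_real_closedBall χ.rOut_pos.le]

theorem exists_deriv (a b : ℝ) (hab : a < b) (P Q : ℕ → ℝ)
    (hP1 : 0 < P 1) (hQ1 : 0 < Q 1) :
    ∃ g : ℝ → ℝ, ContDiff ℝ (⊤ : ℕ∞) g ∧ (∃ m > 0, ∀ x, m ≤ g x) ∧
      ∫ x in a..b, g x = b - a ∧
      (∀ k : ℕ, iteratedDeriv k g a = (k + 1).factorial * P (k + 1)) ∧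
      (∀ k : ℕ, iteratedDeriv k g b = (k + 1).factorial * Q (k + 1)) := by
  obtain ⟨F, hF, hFd, δ₁, hδ₁, hFb⟩ := germ_at a P hP1
  obtain ⟨G, hG, hGd, δ₂, hδ₂, hGb⟩ := germ_at b Q hQ1
  obtain ⟨δ, hδ, h1, h2, h3, h4⟩ : ∃ δ > 0, δ ≤ δ₁ ∧ δ ≤ δ₂ ∧ δ ≤ (b - a) / 4 ∧
      δ ≤ (b - a) / (16 * (P 1 + Q 1)) := by
    refine ⟨min (min δ₁ δ₂) (min ((b - a) / 4) ((b - a) / (16 * (P 1 + Q 1)))), ?_, ?_, ?_, ?_, ?_⟩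
    · have : 0 < b - a := sub_pos.2 hab
      have : 0 < (b - a) / (16 * (P 1 + Q 1)) := by positivity
      simp only [gt_iff_lt, lt_min_iff]
      refine ⟨⟨hδ₁, hδ₂⟩, by linarith, this⟩
    all_goals simp
  let χ : ContDiffBump a := ⟨δ / 2, δ, by positivity, by linarith⟩
  let η : ContDiffBump b := ⟨δ / 2, δ, by positivity, by linarith⟩
  let ψ : ContDiffBump ((a + b) / 2) := ⟨δ / 2, δ, by positivity, by linarith⟩
  have hχ0 : ∀ x, δ ≤ |x - a| → χ x = 0 := fun x hx => χ.zero_of_le_dist hx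
  have hη0 : ∀ x, δ ≤ |x - b| → η x = 0 := fun x hx => η.zero_of_le_dist hx
  have hψ0 : ∀ x, δ ≤ |x - (a + b) / 2| → ψ x = 0 := fun x hx => ψ.zero_of_le_dist hx
  let g₀ : ℝ → ℝ := fun x => χ x * F x + η x * G x + (1 - χ x - η x) * (1 / 2)
  have hχs : ContDiff ℝ (⊤ : ℕ∞) χ := χ.contDiff
  have hηs : ContDiff ℝ (⊤ : ℕ∞) η := η.contDiff
  have hψs : ContDiff ℝ (⊤ : ℕ∞) ψ := ψ.contDiff
  have hg₀ : ContDiff ℝ (⊤ : ℕ∞) g₀ :=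
    ((hχs.mul hF).add (hηs.mul hG)).add (((contDiff_const.sub hχs).sub hηs).mul contDiff_const)
  have hdisj : ∀ x, |x - a| < δ → η x = 0 := fun x hx => hη0 x <| by
    rw [abs_lt] at hx
    rw [le_abs]; right; linarith
  have hup : ∀ x, g₀ x ≤ 1 / 2 + 2 * P 1 * χ x + 2 * Q 1 * η x := by
    intro x
    have k1 : χ x * F x ≤ 2 * P 1 * χ x := by
      by_cases hx : |x - a| < δ
      · nlinarith [χ.nonneg (x := x), (hFb x (hx.trans_le h1)).2]
      · simp [hχ0 x (not_lt.1 hx)]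
    have k2 : η x * G x ≤ 2 * Q 1 * η x := by
      by_cases hx : |x - b| < δ
      · nlinarith [η.nonneg (x := x), (hGb x (hx.trans_le h2)).2]
      · simp [hη0 x (not_lt.1 hx)]
    have := χ.nonneg (x := x)
    have := η.nonneg (x := x)
    simp only [g₀]
    linarith
  have hlow : ∀ x, min (1 / 2) (min (P 1 / 2) (Q 1 / 2)) ≤ g₀ x := by
    intro x
    set m := min (1 / 2 : ℝ) (min (P 1 / 2) (Q 1 / 2)) with hm
    have m1 : m ≤ 1 / 2 := min_le_left _ _
    have m2 : m ≤ P 1 / 2 := (min_le_right _ _).trans (min_le_left _ _)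
    have m3 : m ≤ Q 1 / 2 := (min_le_right _ _).trans (min_le_right _ _)
    have k1 : m * χ x ≤ χ x * F x := by
      by_cases hx : |x - a| < δ
      · nlinarith [χ.nonneg (x := x), (hFb x (hx.trans_le h1)).1]
      · simp [hχ0 x (not_lt.1 hx)]
    have k2 : m * η x ≤ η x * G x := by
      by_cases hx : |x - b| < δ
      · nlinarith [η.nonneg (x := x), (hGb x (hx.trans_le h2)).1]
      · simp [hη0 x (not_lt.1 hx)]
    have k3 : 0 ≤ 1 - χ x - η x := by
      by_cases hx : |x - a| < δ
      · rw [hdisj x hx]; linarith [χ.le_one (x := x)]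
      · rw [hχ0 x (not_lt.1 hx)]; linarith [η.le_one (x := x)]
    simp only [g₀]
    nlinarith
  have hint : ∫ x in a..b, g₀ x < b - a := by
    have cχ : IntervalIntegrable χ MeasureTheory.volume a b := hχs.continuous.intervalIntegrable _ _
    have cη : IntervalIntegrable η MeasureTheory.volume a b := hηs.continuous.intervalIntegrable _ _
    have i1 : ∫ x in a..b, g₀ x ≤ ∫ x in a..b, (1 / 2 + 2 * P 1 * χ x + 2 * Q 1 * η x) := by
      apply intervalIntegral.integral_mono_on hab.le (hg₀.continuous.intervalIntegrable _ _)
      · exact (intervalIntegrable_const.add (cχ.const_mul _)).add (cη.const_mul _)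
      · exact fun x _ => hup x
    rw [intervalIntegral.integral_add (intervalIntegrable_const.add (cχ.const_mul _))
      (cη.const_mul _), intervalIntegral.integral_add intervalIntegrable_const (cχ.const_mul _),
      intervalIntegral.integral_const, intervalIntegral.integral_const_mul,
      intervalIntegral.integral_const_mul, smul_eq_mul] at i1
    have j1 : ∫ x in a..b, χ x ≤ 2 * δ := bump_integral_le χ a b hab.le
    have j2 : ∫ x in a..b, η x ≤ 2 * δ := bump_integral_le η a b hab.le
    rw [le_div_iff₀ (by positivity)] at h4
    nlinarith
  have hψpos : 0 < ∫ x in a..b, ψ x := by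
    apply intervalIntegral.integral_pos hab hψs.continuous.continuousOn
    · exact fun x _ => ψ.nonneg
    · refine ⟨(a + b) / 2, ⟨by linarith, by linarith⟩, ?_⟩
      exact ψ.pos_of_mem_ball (Metric.mem_ball_self ψ.rOut_pos)
  let K : ℝ := (b - a - ∫ x in a..b, g₀ x) / ∫ x in a..b, ψ x
  have hK : 0 ≤ K := div_nonneg (by linarith) hψpos.le
  refine ⟨fun x => g₀ x + K * ψ x, hg₀.add (contDiff_const.mul hψs),
    ⟨min (1 / 2) (min (P 1 / 2) (Q 1 / 2)), by positivity, fun x => ?_⟩, ?_, fun k => ?_, fun k => ?_⟩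
  · have := mul_nonneg hK (ψ.nonneg (x := x))
    linarith [hlow x]
  · rw [intervalIntegral.integral_add (hg₀.continuous.intervalIntegrable _ _)
      ((hψs.continuous.intervalIntegrable _ _).const_mul _), intervalIntegral.integral_const_mul]
    simp only [K]
    rw [div_mul_cancel₀ _ hψpos.ne']
    ring
  · rw [← hFd k]
    apply Filter.EventuallyEq.iteratedDeriv_eq
    filter_upwards [χ.eventuallyEq_one, Metric.ball_mem_nhds a hδ] with x hx hx2
    have hx2 : |x - a| < δ := hx2
    have e : ψ x = 0 := hψ0 x <| by
      rw [abs_lt] at hx2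
      rw [le_abs]; right; linarith
    simp only [g₀, hx, hdisj x hx2, e, Pi.one_apply]
    ring
  · rw [← hGd k]
    apply Filter.EventuallyEq.iteratedDeriv_eq
    filter_upwards [η.eventuallyEq_one, Metric.ball_mem_nhds b hδ] with x hx hx2
    have hx2 : |x - b| < δ := hx2
    have e : ψ x = 0 := hψ0 x <| by
      rw [abs_lt] at hx2
      rw [le_abs]; left; linarith
    have e' : χ x = 0 := hχ0 x <| by
      rw [abs_lt] at hx2
      rw [le_abs]; left; linarith
    simp only [g₀, hx, e', e, Pi.one_apply]
    ring

/-- Given `a < b` and formal power series `P = a₁X + ⋯`, `Q = b₁X + ⋯` with `a₁ > 0`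
and `b₁ > 0`, there is a smooth diffeomorphism `f` of `ℝ` fixing `a` and `b` whose
truncated Taylor series at `a` is `P` and at `b` is `Q`. -/
theorem stmt_13 (a b : ℝ) (hab : a < b) (P Q : ℕ → ℝ)
    (hP1 : 0 < P 1) (hQ1 : 0 < Q 1) :
    ∃ f : ℝ → ℝ, ContDiff ℝ (⊤ : ℕ∞) f ∧ Function.Bijective f ∧ StrictMono f ∧
      (∀ x : ℝ, 0 < deriv f x) ∧ f a = a ∧ f b = b ∧
      (∀ n : ℕ, 1 ≤ n → iteratedDeriv n f a = n.factorial * P n) ∧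
      (∀ n : ℕ, 1 ≤ n → iteratedDeriv n f b = n.factorial * Q n) := by
  obtain ⟨g, hg, ⟨m, hm, hmg⟩, hint, hga, hgb⟩ := exists_deriv a b hab P Q hP1 hQ1
  let f : ℝ → ℝ := fun u => a + ∫ x in a..u, g x
  have hd : ∀ x, HasDerivAt f (g x) x := fun x =>
    (hg.continuous.integral_hasStrictDerivAt a x).hasDerivAt.const_add a
  have hdf : deriv f = g := funext fun x => (hd x).deriv
  have hfd : Differentiable ℝ f := fun x => (hd x).differentiableAt
  have hfs : ContDiff ℝ (⊤ : ℕ∞) f := contDiff_infty_iff_deriv.2 ⟨hfd, hdf ▸ hg⟩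
  have hpos : ∀ x, 0 < deriv f x := fun x => by rw [hdf]; exact hm.trans_le (hmg x)
  have hmono : StrictMono f := strictMono_of_deriv_pos hpos
  have hmon : Monotone fun x => f x - m * x := by
    apply monotone_of_deriv_nonneg (hfd.sub (differentiable_id.const_mul m))
    intro x
    have h : HasDerivAt (fun x => f x - m * x) (g x - m * 1) x :=
      (hd x).sub ((hasDerivAt_id x).const_mul m)
    refine le_of_le_of_eq ?_ h.deriv.symm
    linarith [hmg x]
  have htop : Filter.Tendsto f Filter.atTop Filter.atTop := by
    refine Filter.tendsto_atTop_mono' _ ?_ (Filter.tendsto_atTop_add_const_right _ (f 0)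
      (Filter.tendsto_id.const_mul_atTop hm))
    filter_upwards [Filter.eventually_ge_atTop 0] with x hx
    have := hmon hx
    simp only [id] at *
    linarith
  have hbot : Filter.Tendsto f Filter.atBot Filter.atBot := by
    refine Filter.tendsto_atBot_mono' _ ?_ (Filter.tendsto_atBot_add_const_right _ (f 0)
      (Filter.tendsto_id.const_mul_atBot hm))
    filter_upwards [Filter.eventually_le_atBot 0] with x hx
    have := hmon hx
    simp only [id] at *
    linarith
  refine ⟨f, hfs, ⟨hmono.injective, hfs.continuous.surjective htop hbot⟩, hmono, hpos, ?_, ?_,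
    ?_, ?_⟩
  · simp [f]
  · simp [f, hint]
  · rintro (_ | k) hn
    · omega
    · rw [iteratedDeriv_succ', hdf, hga]
  · rintro (_ | k) hn
    · omega
    · rw [iteratedDeriv_succ', hdf, hgb]
end
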